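/- Let β ∈ (1,2], L > 0, and let f₀ be a continuous log-concave density on ℝ whose score ψ₀ satisfies |ψ₀(x) − ψ₀(y)| ≤ L|x−y|^{β−1} for all x, y. Then for every u ∈ (0,1), the density quantile derivative satisfies |J₀'(u)| ≤ 2·L^{1/β}·max{1, log(C_β / min{u, 1−u})}^{(β−1)/β}, where C_β := √(2·β^{1/(β−1)}·(β−1)/π) and J₀' = ψ₀ ∘ F₀⁻¹. -/

import Mathlib

open MeasureTheory Real

/-- Supergradient inequality on the positivity set. -/
lemma aux_supergrad (f ψ : ℝ → ℝ) (hcont : Continuous f)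
    (hlogconc : ∀ x y : ℝ, ∀ t ∈ Set.Icc (0:ℝ) 1,
      f x ^ t * f y ^ (1 - t) ≤ f (t * x + (1 - t) * y))
    (hψ : ∀ x : ℝ, 0 < f x →
      HasDerivWithinAt (fun t => Real.log (f t)) (ψ x) (Set.Ici x) x)
    (x y : ℝ) (hx : 0 < f x) (hy : 0 < f y) :
    Real.log (f y) ≤ Real.log (f x) + ψ x * (y - x) := by
  have hconc : ConcaveOn ℝ {x | 0 < f x} (fun t => Real.log (f t)) := by
    have key : ∀ a b : ℝ, 0 < f a → 0 < f b → ∀ t ∈ Set.Icc (0:ℝ) 1,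
        0 < f a ^ t * f b ^ (1 - t) := fun a b ha hb t _ => by positivity
    refine ⟨?_, ?_⟩
    · intro a ha b hb s t hs ht hst
      have h1 : t = 1 - s := by linarith
      subst h1
      have hs' : s ∈ Set.Icc (0:ℝ) 1 := ⟨hs, by linarith⟩
      exact lt_of_lt_of_le (key a b ha hb s hs') (hlogconc a b s hs')
    · intro a ha b hb s t hs ht hst
      have h1 : t = 1 - s := by linarith
      subst h1
      have hs' : s ∈ Set.Icc (0:ℝ) 1 := ⟨hs, by linarith⟩
      have h2 := Real.log_le_log (key a b ha hb s hs') (hlogconc a b s hs')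
      have ha' : 0 < f a := ha
      have hb' : 0 < f b := hb
      rw [Real.log_mul (by positivity) (by positivity), Real.log_rpow ha', Real.log_rpow hb'] at h2
      simpa using h2
  have hd : HasDerivWithinAt (fun t => Real.log (f t)) (ψ x) (Set.Ioi x) x :=
    (hψ x hx).mono Set.Ioi_subset_Ici_self
  rcases lt_trichotomy y x with h | h | h
  · have ht := hasDerivWithinAt_iff_tendsto_slope' (by simp) |>.1 hd
    have hev : ∀ᶠ z in nhdsWithin x (Set.Ioi x), 0 < f z :=
      nhdsWithin_le_nhds (hcont.continuousAt.eventually (lt_mem_nhds hx))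
    have : ψ x ≤ (Real.log (f x) - Real.log (f y)) / (x - y) := by
      refine le_of_tendsto ht ?_
      filter_upwards [hev, self_mem_nhdsWithin] with z hz hxz
      have := hconc.slope_anti_adjacent hy hz h hxz
      rw [slope_def_field]
      exact this
    rw [le_div_iff₀ (by linarith)] at this
    linarith
  · subst h; simp
  · have := hconc.slope_le_of_hasDerivWithinAt_Ioi hx hy h hd
    rw [slope_def_field, div_le_iff₀ (by linarith)] at this
    linarith

lemma aux_cont (β L : ℝ) (hβ : 1 < β) (ψ : ℝ → ℝ)
    (hholder : ∀ x y : ℝ, |ψ x - ψ y| ≤ L * |x - y| ^ (β - 1)) : Continuous ψ := by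
  rw [continuous_iff_continuousAt]
  intro x
  rw [ContinuousAt, tendsto_iff_dist_tendsto_zero]
  have hb : Filter.Tendsto (fun y => L * |y - x| ^ (β - 1)) (nhds x) (nhds 0) := by
    have : Continuous (fun y => L * |y - x| ^ (β - 1)) := by
      refine continuous_const.mul (Continuous.rpow_const (by fun_prop) ?_)
      intro y; right; linarith
    have h := this.tendsto x
    simpa [Real.zero_rpow (by linarith : β - 1 ≠ 0)] using h
  refine squeeze_zero (fun _ => dist_nonneg) (fun y => ?_) hb
  rw [Real.dist_eq]
  exact hholder y x

lemma aux_pos (f ψ : ℝ → ℝ) (hcont : Continuous f) (hψc : Continuous ψ)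
    (hf_nonneg : ∀ x, 0 ≤ f x) (hf_mass : ∫ x, f x = 1)
    (hsup : ∀ x y : ℝ, 0 < f x → 0 < f y →
      Real.log (f y) ≤ Real.log (f x) + ψ x * (y - x)) : ∀ x, 0 < f x := by
  obtain ⟨x0, h0⟩ : ∃ x0, 0 < f x0 := by
    by_contra! h
    have : f = fun _ => 0 := funext fun x => le_antisymm (h x) (hf_nonneg x)
    rw [this] at hf_mass
    simp at hf_mass
  have hset : {x | 0 < f x} = {x | f x0 * Real.exp (-(ψ x * (x0 - x))) ≤ f x} := by
    ext x
    simp only [Set.mem_ofPred_eq]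
    constructor
    · intro hx
      have := hsup x x0 hx h0
      rw [← Real.log_le_log_iff (by positivity) hx, Real.log_mul h0.ne' (Real.exp_ne_zero _),
        Real.log_exp]
      linarith
    · intro hx
      exact lt_of_lt_of_le (by positivity) hx
  have hclopen : IsClopen {x | 0 < f x} := by
    refine ⟨?_, isOpen_lt continuous_const hcont⟩
    rw [hset]
    exact isClosed_le (by fun_prop) hcont
  have := hclopen.eq_univ ⟨x0, h0⟩
  intro x
  have hx : x ∈ {x | 0 < f x} := by rw [this]; trivial
  exact hx

lemma aux_deriv (β L : ℝ) (hβ : 1 < β) (φ ψ : ℝ → ℝ)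
    (hsup : ∀ x y : ℝ, φ y ≤ φ x + ψ x * (y - x))
    (hholder : ∀ x y : ℝ, |ψ x - ψ y| ≤ L * |x - y| ^ (β - 1)) (x : ℝ) :
    HasDerivAt φ (ψ x) x := by
  have hc := aux_cont β L hβ ψ hholder
  rw [hasDerivAt_iff_isLittleO, Asymptotics.isLittleO_iff]
  intro c hc0
  have hev : ∀ᶠ y in nhds x, |ψ y - ψ x| < c := by
    have := Metric.tendsto_nhds.1 (hc.tendsto x) c hc0
    simpa [Real.dist_eq] using this
  filter_upwards [hev] with y hy
  have h1 := hsup x y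
  have h2 := hsup y x
  have h3 : |φ y - φ x - (y - x) * ψ x| ≤ |(ψ y - ψ x) * (y - x)| := by
    rw [abs_of_nonpos (by linarith)]
    refine le_trans ?_ (neg_le_abs _)
    linarith
  simp only [smul_eq_mul, Real.norm_eq_abs]
  refine h3.trans ?_
  rw [abs_mul]
  gcongr

lemma aux_lower (β L : ℝ) (hβ : 1 < β) (φ ψ : ℝ → ℝ)
    (hd : ∀ x, HasDerivAt φ (ψ x) x)
    (hholder : ∀ x y : ℝ, |ψ x - ψ y| ≤ L * |x - y| ^ (β - 1)) (x y : ℝ) (hxy : x ≤ y) :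
    φ x + ψ x * (y - x) - L * (y - x) ^ β / β ≤ φ y := by
  have hg : ∀ z, HasDerivAt (fun z => φ z - ψ x * (z - x) + L * (z - x) ^ β / β)
      (ψ z - ψ x + L * (z - x) ^ (β - 1)) z := by
    intro z
    have h1 : HasDerivAt (fun z => (z - x) ^ β) (1 * β * (z - x) ^ (β - 1)) z :=
      ((hasDerivAt_id z).sub_const x).rpow_const (Or.inr hβ.le)
    have h2 := ((hd z).sub (((hasDerivAt_id z).sub_const x).const_mul (ψ x))).add
      ((h1.const_mul L).div_const β)
    have hb : β ≠ 0 := by linarith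
    have e : ψ z - ψ x + L * (z - x) ^ (β - 1) =
        ψ z - ψ x * 1 + L * (1 * β * (z - x) ^ (β - 1)) / β := by
      field_simp
    rw [e]
    exact h2
  have hm : MonotoneOn (fun z => φ z - ψ x * (z - x) + L * (z - x) ^ β / β) (Set.Ici x) := by
    refine monotoneOn_of_deriv_nonneg (convex_Ici x)
      (fun z _ => (hg z).continuousAt.continuousWithinAt)
      (fun z _ => (hg z).differentiableAt.differentiableWithinAt) ?_
    intro z hz
    rw [interior_Ici] at hz
    rw [(hg z).deriv]
    have h := hholder z x
    rw [abs_of_pos (sub_pos.2 hz : 0 < z - x)] at h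
    have := neg_abs_le (ψ z - ψ x)
    linarith
  have := hm (Set.mem_Ici.2 le_rfl) (Set.mem_Ici.2 hxy) hxy
  simp only [sub_self, mul_zero, sub_zero] at this
  rw [Real.zero_rpow (by linarith)] at this
  simp at this
  linarith

lemma aux_core (β L : ℝ) (hβ : β ∈ Set.Ioc (1:ℝ) 2) (hL : 0 < L)
    (f ψ : ℝ → ℝ) (hpos : ∀ x, 0 < f x)
    (hf_int : Integrable f volume) (hf_mass : ∫ x, f x = 1)
    (hsup : ∀ x y : ℝ, Real.log (f y) ≤ Real.log (f x) + ψ x * (y - x))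
    (hholder : ∀ x y : ℝ, |ψ x - ψ y| ≤ L * |x - y| ^ (β - 1))
    (x : ℝ) (hx : 2 * L ^ (1 / β) < ψ x) :
    (∫ t in Set.Iic x, f t) * Real.exp ((ψ x / (2 * L ^ (1 / β))) ^ (β / (β - 1))) ≤
      Real.sqrt (2 * β ^ (1 / (β - 1)) * (β - 1) / Real.pi) := by
  obtain ⟨hβ1, hβ2⟩ := hβ
  have hb0 : 0 < β - 1 := by linarith
  have hL' : 0 < L ^ (1 / β) := by positivity
  set s := ψ x with hs
  have hs0 : 0 < s := by linarith
  set p := β / (β - 1) with hp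
  have hp2 : 2 ≤ p := by rw [hp, le_div_iff₀ hb0]; linarith
  set w := (s / (2 * L ^ (1 / β))) ^ p with hw
  have hw1 : 1 ≤ w := Real.one_le_rpow (by rw [le_div_iff₀ (by positivity)]; linarith) (by linarith)
  set T := (s / L) ^ (1 / (β - 1)) with hT
  have hT0 : 0 < T := by positivity
  have hd := aux_deriv β L hβ1 (fun t => Real.log (f t)) ψ hsup hholder
  have hlow := aux_lower β L hβ1 (fun t => Real.log (f t)) ψ hd hholder
  -- tail bound
  have hu : ∫ t in Set.Iic x, f t ≤ f x / s := by
    have h1 : ∫ t in Set.Iic x, f t ≤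
        ∫ t in Set.Iic x, (f x * Real.exp (-(s * x))) * Real.exp (s * t) := by
      refine integral_mono hf_int.integrableOn
        ((integrableOn_exp_mul_Iic hs0 x).const_mul _) ?_
      intro t
      have := hsup x t
      show f t ≤ f x * Real.exp (-(s * x)) * Real.exp (s * t)
      rw [mul_assoc, ← Real.exp_add, ← Real.log_le_log_iff (hpos t) (by have := hpos x; positivity),
        Real.log_mul (hpos x).ne' (Real.exp_ne_zero _), Real.log_exp]
      linarith
    rw [integral_const_mul, integral_exp_mul_Iic hs0] at h1
    refine h1.trans (le_of_eq ?_)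
    rw [mul_div_assoc', mul_assoc, ← Real.exp_add]
    simp
  -- lower bound of the mass
  have hmass : f x * (p / s * (Real.exp (s * T / p) - 1)) ≤ 1 := by
    have hc : s / p ≠ 0 := by positivity
    have hInt : ∫ t in x..(x + T), f x * Real.exp (s / p * (t - x)) =
        f x * (p / s * (Real.exp (s * T / p) - 1)) := by
      rw [intervalIntegral.integral_const_mul]
      have h := intervalIntegral.integral_comp_sub_right (a := x) (b := x + T)
        (fun t => Real.exp (s / p * t)) x
      rw [h, intervalIntegral.integral_comp_mul_left (fun t => Real.exp t) hc, integral_exp]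
      simp
      left; left; ring_nf
    rw [← hInt, ← hf_mass]
    have h1 : ∫ t in x..(x + T), f x * Real.exp (s / p * (t - x)) ≤ ∫ t in x..(x + T), f t := by
      refine intervalIntegral.integral_mono_on (by linarith) (Continuous.intervalIntegrable (by fun_prop) _ _)
        hf_int.intervalIntegrable ?_
      intro t ht
      rw [← Real.log_le_log_iff (by have := hpos x; positivity) (hpos t),
        Real.log_mul (hpos x).ne' (Real.exp_ne_zero _), Real.log_exp]
      refine le_trans ?_ (hlow x t ht.1)
      have ht0 : 0 ≤ t - x := by linarith [ht.1]
      have h2 : (t - x) ^ β = (t - x) ^ (β - 1) * (t - x) := by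
        conv_rhs => rw [← Real.rpow_add_one' ht0 (by linarith)]
        simp
      have h3 : (t - x) ^ (β - 1) ≤ s / L := by
        have : (t - x) ^ (β - 1) ≤ T ^ (β - 1) := by
          gcongr; linarith [ht.2]
        rw [hT, ← Real.rpow_mul (by positivity), one_div_mul_cancel hb0.ne', Real.rpow_one] at this
        exact this
      rw [h2]
      have h4 : s / p = s - s / β := by rw [hp]; field_simp
      have h5 : L * ((t - x) ^ (β - 1) * (t - x)) / β ≤ s / β * (t - x) := by
        calc L * ((t - x) ^ (β - 1) * (t - x)) / β ≤ L * (s / L * (t - x)) / β := by gcongr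
          _ = s / β * (t - x) := by field_simp
      rw [h4]
      linarith
    refine h1.trans ?_
    rw [intervalIntegral.integral_of_le (by linarith)]
    exact setIntegral_le_integral hf_int (Filter.Eventually.of_forall fun t => (hpos t).le)
  -- identify the exponent
  have hA : 2 * w ≤ s * T / p := by
    have h1 : s * T = 2 ^ p * w := by
      rw [hw, ← Real.mul_rpow (by norm_num) (by positivity), hT]
      have e1 : 2 * (s / (2 * L ^ (1 / β))) = s / L ^ (1 / β) := by field_simp
      rw [e1, Real.div_rpow hs0.le hL.le, Real.div_rpow hs0.le hL'.le, ← Real.rpow_mul hL.le]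
      have e2 : 1 / β * p = 1 / (β - 1) := by rw [hp]; field_simp
      have e3 : p = 1 / (β - 1) + 1 := by rw [hp]; field_simp; ring
      rw [e2, mul_div_assoc']
      congr 1
      rw [e3, Real.rpow_add_one hs0.ne']
      ring
    have h2 : 2 * p ≤ 2 ^ p := by
      have := one_add_mul_self_le_rpow_one_add (s := 1) (by norm_num) (p := p - 1) (by linarith)
      have e : (2:ℝ) ^ p = 2 ^ (p - 1) * 2 := by
        rw [← Real.rpow_add_one (by norm_num)]; simp
      rw [e]
      norm_num at this
      linarith
    rw [h1, le_div_iff₀ (by linarith)]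
    nlinarith
  have hC : 1 ≤ p * Real.sqrt (2 * β ^ (1 / (β - 1)) * (β - 1) / Real.pi) := by
    have hB : 2 ≤ β ^ (1 / (β - 1)) := by
      have := one_add_mul_self_le_rpow_one_add (s := β - 1) (by linarith) (p := 1 / (β - 1))
        (by rw [le_div_iff₀ hb0]; linarith)
      rw [one_div_mul_cancel hb0.ne'] at this
      simp only [add_sub_cancel] at this
      linarith
    have : 1 / p ≤ Real.sqrt (2 * β ^ (1 / (β - 1)) * (β - 1) / Real.pi) := by
      apply Real.le_sqrt_of_sq_le
      rw [hp, one_div_div, div_pow, div_le_div_iff₀ (by positivity) Real.pi_pos]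
      have hpi := Real.pi_le_four
      have k1 : (β - 1) ^ 2 * π ≤ (β - 1) * 4 := by
        have : (β - 1) ^ 2 ≤ β - 1 := by nlinarith
        nlinarith [Real.pi_pos]
      have k2 : (β - 1) * 4 ≤ 2 * β ^ (1 / (β - 1)) * (β - 1) := by nlinarith
      have k3 : 2 * β ^ (1 / (β - 1)) * (β - 1) * 1 ≤ 2 * β ^ (1 / (β - 1)) * (β - 1) * β ^ 2 := by
        gcongr; nlinarith
      linarith
    rw [div_le_iff₀ (by linarith)] at this
    linarith
  set C := Real.sqrt (2 * β ^ (1 / (β - 1)) * (β - 1) / Real.pi) with hCdef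
  have hE : Real.exp w ≤ Real.exp (s * T / p) - 1 := by
    have h1 : Real.exp (2 * w) ≤ Real.exp (s * T / p) := Real.exp_le_exp.2 hA
    have h2 : Real.exp (2 * w) = Real.exp w * Real.exp w := by rw [← Real.exp_add]; ring_nf
    have h3 := Real.add_one_le_exp w
    nlinarith
  have h1 : p * ((f x / s) * Real.exp w) ≤ 1 := by
    refine le_trans ?_ hmass
    have : f x * (p / s * (Real.exp (s * T / p) - 1)) =
      p * (f x / s) * (Real.exp (s * T / p) - 1) := by ring
    rw [this, ← mul_assoc]
    have := hpos x
    gcongr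
  have h2 : (∫ t in Set.Iic x, f t) * Real.exp w ≤ (f x / s) * Real.exp w := by gcongr
  have h3 : p * ((f x / s) * Real.exp w) ≤ p * C := h1.trans hC
  exact h2.trans (le_of_mul_le_mul_left h3 (by linarith))


/-- If `f₀` is a continuous log-concave density on `ℝ` whose score `ψ₀` is `(β−1, L)`-Hölder
with `β ∈ (1,2]`, then for every `u ∈ (0,1)` the density quantile derivative satisfies
`|J₀'(u)| ≤ 2 L^{1/β} log₊^{(β−1)/β}(C_β / (u ∧ (1−u)))`, where
`C_β = √(2 β^{1/(β−1)} (β−1)/π)` and `J₀' = ψ₀ ∘ F₀⁻¹`. -/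
theorem density_quantile_deriv_holder_bound
    (β L : ℝ) (hβ : β ∈ Set.Ioc (1:ℝ) 2) (hL : 0 < L)
    (f₀ : ℝ → ℝ) (hcont : Continuous f₀)
    (hf_nonneg : ∀ x, 0 ≤ f₀ x) (hf_int : Integrable f₀ volume) (hf_mass : ∫ x, f₀ x = 1)
    (hlogconc : ∀ x y : ℝ, ∀ t ∈ Set.Icc (0:ℝ) 1,
      f₀ x ^ t * f₀ y ^ (1 - t) ≤ f₀ (t * x + (1 - t) * y))
    (Finv : ℝ → ℝ) (hFinv : ∀ u ∈ Set.Ioo (0:ℝ) 1, (∫ t in Set.Iic (Finv u), f₀ t) = u)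
    (ψ₀ : ℝ → ℝ)
    (hψ : ∀ x : ℝ, 0 < f₀ x →
      HasDerivWithinAt (fun t => Real.log (f₀ t)) (ψ₀ x) (Set.Ici x) x)
    (hholder : ∀ x y : ℝ, |ψ₀ x - ψ₀ y| ≤ L * |x - y| ^ (β - 1))
    (Cβ : ℝ) (hCβ : Cβ = Real.sqrt (2 * β ^ (1 / (β - 1)) * (β - 1) / Real.pi)) :
    ∀ u ∈ Set.Ioo (0:ℝ) 1,
      |ψ₀ (Finv u)| ≤
        2 * L ^ (1 / β) * (max 1 (Real.log (Cβ / min u (1 - u)))) ^ ((β - 1) / β) := by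
  intro u hu
  obtain ⟨hu0, hu1⟩ := hu
  have hβ1 := hβ.1
  have hb0 : 0 < β - 1 := by linarith
  have hL' : 0 < L ^ (1 / β) := by positivity
  have hsup0 := aux_supergrad f₀ ψ₀ hcont hlogconc hψ
  have hψc := aux_cont β L hβ1 ψ₀ hholder
  have hpos := aux_pos f₀ ψ₀ hcont hψc hf_nonneg hf_mass hsup0
  have hsup : ∀ x y, Real.log (f₀ y) ≤ Real.log (f₀ x) + ψ₀ x * (y - x) :=
    fun x y => hsup0 x y (hpos x) (hpos y)
  set x := Finv u with hxdef
  have hFu : ∫ t in Set.Iic x, f₀ t = u := hFinv u ⟨hu0, hu1⟩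
  have hmin0 : 0 < min u (1 - u) := lt_min hu0 (by linarith)
  have hmax1 : (1:ℝ) ≤ max 1 (Real.log (Cβ / min u (1 - u))) := le_max_left _ _
  rcases le_or_gt |ψ₀ x| (2 * L ^ (1 / β)) with h | h
  · refine h.trans ?_
    have := Real.one_le_rpow hmax1 (z := (β - 1) / β) (by positivity)
    nlinarith
  have key : min u (1 - u) * Real.exp ((|ψ₀ x| / (2 * L ^ (1 / β))) ^ (β / (β - 1))) ≤ Cβ := by
    rw [hCβ]
    rcases le_or_gt 0 (ψ₀ x) with h0 | h0
    · rw [abs_of_nonneg h0] at h ⊢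
      have := aux_core β L hβ hL f₀ ψ₀ hpos hf_int hf_mass hsup hholder x h
      rw [hFu] at this
      refine le_trans ?_ this
      gcongr
      exact min_le_left _ _
    · rw [abs_of_neg h0] at h ⊢
      have := aux_core β L hβ hL (fun t => f₀ (-t)) (fun t => -ψ₀ (-t)) (fun t => hpos _)
        hf_int.comp_neg (by rw [integral_neg_eq_self (fun t => f₀ t)]; exact hf_mass)
        (fun a b => by have := hsup (-a) (-b); linarith)
        (fun a b => by
          have := hholder (-b) (-a)
          rw [show -ψ₀ (-a) - -ψ₀ (-b) = ψ₀ (-b) - ψ₀ (-a) by ring]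
          rwa [show -b - -a = a - b by ring] at this) (-x) (by simpa using h)
      simp only [neg_neg] at this
      rw [integral_comp_neg_Iic, neg_neg] at this
      have hsum := intervalIntegral.integral_Iic_add_Ioi (b := x) hf_int.integrableOn
        hf_int.integrableOn
      rw [hFu, hf_mass] at hsum
      rw [show ∫ t in Set.Ioi x, f₀ t = 1 - u by linarith] at this
      refine le_trans ?_ this
      gcongr
      exact min_le_right _ _
  set w := (|ψ₀ x| / (2 * L ^ (1 / β))) ^ (β / (β - 1)) with hw
  have hwle : w ≤ max 1 (Real.log (Cβ / min u (1 - u))) := by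
    refine le_trans ?_ (le_max_right _ _)
    have h1 : Real.exp w ≤ Cβ / min u (1 - u) := by
      rw [le_div_iff₀ hmin0]; linarith
    rw [Real.le_log_iff_exp_le (lt_of_lt_of_le (Real.exp_pos _) h1)]
    exact h1
  have h2 : |ψ₀ x| / (2 * L ^ (1 / β)) = w ^ ((β - 1) / β) := by
    rw [hw, ← Real.rpow_mul (by positivity)]
    rw [show β / (β - 1) * ((β - 1) / β) = 1 by field_simp, Real.rpow_one]
  have h3 : w ^ ((β - 1) / β) ≤ max 1 (Real.log (Cβ / min u (1 - u))) ^ ((β - 1) / β) := by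
    have : 0 ≤ w := by positivity
    gcongr
  rw [← h2, div_le_iff₀ (by positivity)] at h3
  linarith
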